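/- arXiv:2310.01865 — 3 statements merged into one kernel-verified Lean document; each statement's English description precedes it below -/
import Mathlib

section
/- Let (Ω, ℱ, μ) be a probability space, E a measurable space, and let C : Ω → E, S : Ω → ℝ, W : Ω → ℝ, U : Ω → ℝ be measurable with W(ω) ∈ {0,1} for every ω and U integrable. Let g : ℝ × E → ℝ be measurable such that ω ↦ g(1, C(ω)) and ω ↦ g(0, C(ω)) are integrable, and define the outcome Y(ω) = g(W(ω), C(ω)) + U(ω). Assume the instrument-exclusion condition μ[U | σ(S,C)] = μ[U | σ(C)] almost everywhere. Define the counterfactual prediction functions f₁ := (ω ↦ g(1, C(ω))) + μ[U | σ(C)] and f₀ := (ω ↦ g(0, C(ω))) + μ[U | σ(C)]. Then, almost everywhere, μ[Y | σ(S,C)] = f₁ · μ[W | σ(S,C)] + f₀ · (1 − μ[W | σ(S,C)]). -/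
open MeasureTheory

/-- The IV counterfactual prediction identity for a binary treatment:
under the instrument-exclusion condition `μ[U | σ(S,C)] = μ[U | σ(C)]`,
the conditional expectation of the outcome `Y = g(W, C) + U` given `σ(S,C)` equals
`f₁ · μ[W | σ(S,C)] + f₀ · (1 − μ[W | σ(S,C)])`, where
`f_w = g(w, C) + μ[U | σ(C)]` are the counterfactual prediction functions. -/
theorem civ_counterfactual_prediction_identity
    {Ω E : Type*} [MeasurableSpace Ω] [MeasurableSpace E]
    {μ : Measure Ω} [IsProbabilityMeasure μ]
    (C : Ω → E) (S W U : Ω → ℝ)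
    (hC : Measurable C) (hS : Measurable S) (hW : Measurable W) (hU : Measurable U)
    (hWbin : ∀ ω, W ω = 0 ∨ W ω = 1)
    (hUint : Integrable U μ)
    (g : ℝ × E → ℝ) (hg : Measurable g)
    (hg1 : Integrable (fun ω => g (1, C ω)) μ)
    (hg0 : Integrable (fun ω => g (0, C ω)) μ)
    (Y : Ω → ℝ) (hY : Y = fun ω => g (W ω, C ω) + U ω)
    (hexcl :
      μ[U | MeasurableSpace.comap (fun ω => (S ω, C ω)) inferInstance]
        =ᵐ[μ] μ[U | MeasurableSpace.comap C inferInstance])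
    (f₁ f₀ : Ω → ℝ)
    (hf₁ : f₁ = fun ω =>
      g (1, C ω) + (μ[U | MeasurableSpace.comap C inferInstance]) ω)
    (hf₀ : f₀ = fun ω =>
      g (0, C ω) + (μ[U | MeasurableSpace.comap C inferInstance]) ω) :
    μ[Y | MeasurableSpace.comap (fun ω => (S ω, C ω)) inferInstance]
      =ᵐ[μ] fun ω =>
        f₁ ω * (μ[W | MeasurableSpace.comap (fun ω => (S ω, C ω)) inferInstance]) ω
          + f₀ ω * (1 - (μ[W | MeasurableSpace.comap (fun ω => (S ω, C ω)) inferInstance]) ω) := by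
  have hm : MeasurableSpace.comap (fun ω => (S ω, C ω)) inferInstance ≤ ‹MeasurableSpace Ω› :=
    (hS.prodMk hC).comap_le
  have hGm : ∀ w : ℝ, StronglyMeasurable[MeasurableSpace.comap (fun ω => (S ω, C ω)) inferInstance]
      (fun ω => g (w, C ω)) := by
    intro w
    have h1 : Measurable (fun p : ℝ × E => g (w, p.2)) := by fun_prop
    exact (h1.comp (comap_measurable (fun ω => (S ω, C ω)))).stronglyMeasurable
  generalize hmm : MeasurableSpace.comap (fun ω => (S ω, C ω)) inferInstance = m at *
  let D : Ω → ℝ := (fun ω => g (1, C ω)) - (fun ω => g (0, C ω))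
  have hD : Integrable D μ := hg1.sub hg0
  have hDm : StronglyMeasurable[m] D := (hGm 1).sub (hGm 0)
  have hWb : ∀ᵐ ω ∂μ, ‖W ω‖ ≤ 1 :=
    Filter.Eventually.of_forall fun ω => by rcases hWbin ω with h | h <;> simp [h]
  have hWint : Integrable W μ := Integrable.of_bound hW.aestronglyMeasurable 1 hWb
  have hDW : Integrable (D * W) μ := hD.mul_bdd hW.aestronglyMeasurable hWb
  have hYe : Y = (D * W + fun ω => g (0, C ω)) + U := by
    rw [hY]
    funext ω
    rcases hWbin ω with h | h <;> simp [h, D]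
  have e1 := condExp_add (hDW.add hg0) hUint m
  have e2 := condExp_add hDW hg0 m
  have e3 := condExp_mul_of_stronglyMeasurable_left hDm hDW hWint
  have e4 := condExp_of_stronglyMeasurable hm (hGm 0) hg0
  rw [hYe]
  filter_upwards [e1, e2, e3, hexcl] with ω a1 a2 a3 a4
  rw [a1, Pi.add_apply, a2, Pi.add_apply, a3, e4, a4, hf₁, hf₀]
  simp only [Pi.mul_apply, Pi.sub_apply, D]
  ring
end

section
/- Let (Ω, ℱ, μ) be a probability space, E and F measurable spaces, and let C : Ω → E, S : Ω → ℝ, W : Ω → ℝ, U : Ω → ℝ be measurable with W(ω) ∈ {0,1} for every ω and U integrable. Let ψ : E → F be measurable and set Z := ψ ∘ C. Let g̃ : ℝ × F → ℝ be measurable such that ω ↦ g̃(1, Z(ω)) and ω ↦ g̃(0, Z(ω)) are integrable, define Y(ω) = g̃(W(ω), Z(ω)) + U(ω), and suppose there is a measurable k : F → ℝ with μ[U | σ(C)] = k ∘ Z almost everywhere and that μ[U | σ(S,C)] = μ[U | σ(C)] almost everywhere. Define f̃₁(z) := g̃(1, z) + k(z) and f̃₀(z) := g̃(0, z) + k(z).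 Then, almost everywhere, μ[Y | σ(S,C)] = (f̃₁ ∘ Z) · μ[W | σ(S,C)] + (f̃₀ ∘ Z) · (1 − μ[W | σ(S,C)]). -/
open MeasureTheory

theorem civ_aux {Ω : Type*} {m m0 : MeasurableSpace Ω} {μ : Measure Ω} [IsProbabilityMeasure μ]
    (hm : m ≤ m0) (W U a b : Ω → ℝ) (hW : Measurable[m0] W)
    (hWbin : ∀ ω, W ω = 0 ∨ W ω = 1) (hU : Integrable U μ)
    (ha : StronglyMeasurable[m] a) (hb : StronglyMeasurable[m] b)
    (hai : Integrable a μ) (hbi : Integrable b μ) :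
    μ[(a - b) * W + (b + U) | m] =ᵐ[μ] (a - b) * μ[W | m] + (b + μ[U | m]) := by
  have hbd : ∀ᵐ ω ∂μ, ‖W ω‖ ≤ 1 := Filter.Eventually.of_forall fun ω => by
    rcases hWbin ω with h | h <;> simp [h]
  have hWi : Integrable W μ := Integrable.of_bound hW.aestronglyMeasurable 1 hbd
  have hdW : Integrable ((a - b) * W) μ :=
    (hai.sub hbi).mul_bdd (c := 1) hW.aestronglyMeasurable hbd
  have h1 := condExp_add hdW (hbi.add hU) m
  have h2 := condExp_add hbi hU m
  have h3 := condExp_mul_of_stronglyMeasurable_left (ha.sub hb) hdW hWi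
  rw [condExp_of_stronglyMeasurable hm hb hbi] at h2
  exact h1.trans (h3.add h2)

/-- Measure-theoretic content of the paper's Theorem 1: when the structural outcome
function and the confounding shift `μ[U | σ(C)]` factor through the learned representation
`Z = ψ ∘ C`, the counterfactual prediction function can be written as a function of the
treatment and the representation, and the inverse-problem identity
`μ[Y | σ(S,C)] = (f̃₁ ∘ Z) · μ[W | σ(S,C)] + (f̃₀ ∘ Z) · (1 − μ[W | σ(S,C)])` holds. -/
theorem civ_representation_counterfactual_identity
    {Ω E F : Type*} [MeasurableSpace Ω] [MeasurableSpace E] [MeasurableSpace F]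
    {μ : Measure Ω} [IsProbabilityMeasure μ]
    (C : Ω → E) (S W U : Ω → ℝ)
    (hC : Measurable C) (hS : Measurable S) (hW : Measurable W) (hU : Measurable U)
    (hWbin : ∀ ω, W ω = 0 ∨ W ω = 1)
    (hUint : Integrable U μ)
    (ψ : E → F) (hψ : Measurable ψ)
    (Z : Ω → F) (hZ : Z = ψ ∘ C)
    (gt : ℝ × F → ℝ) (hgt : Measurable gt)
    (hgt1 : Integrable (fun ω => gt (1, Z ω)) μ)
    (hgt0 : Integrable (fun ω => gt (0, Z ω)) μ)
    (Y : Ω → ℝ) (hY : Y = fun ω => gt (W ω, Z ω) + U ω)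
    (k : F → ℝ) (hk : Measurable k)
    (hfactor :
      μ[U | MeasurableSpace.comap C inferInstance] =ᵐ[μ] fun ω => k (Z ω))
    (hexcl :
      μ[U | MeasurableSpace.comap (fun ω => (S ω, C ω)) inferInstance]
        =ᵐ[μ] μ[U | MeasurableSpace.comap C inferInstance])
    (ft₁ ft₀ : F → ℝ)
    (hft₁ : ft₁ = fun z => gt (1, z) + k z)
    (hft₀ : ft₀ = fun z => gt (0, z) + k z) :
    μ[Y | MeasurableSpace.comap (fun ω => (S ω, C ω)) inferInstance]
      =ᵐ[μ] fun ω =>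
        ft₁ (Z ω) * (μ[W | MeasurableSpace.comap (fun ω => (S ω, C ω)) inferInstance]) ω
          + ft₀ (Z ω)
            * (1 - (μ[W | MeasurableSpace.comap (fun ω => (S ω, C ω)) inferInstance]) ω) := by
  have hm : MeasurableSpace.comap (fun ω => (S ω, C ω)) inferInstance ≤ ‹MeasurableSpace Ω› :=
    (hS.prodMk hC).comap_le
  have hsm : ∀ t : ℝ, StronglyMeasurable[MeasurableSpace.comap (fun ω => (S ω, C ω)) inferInstance]
      (fun ω => gt (t, Z ω)) := by
    intro t
    have h : Measurable (fun p : ℝ × E => gt (t, ψ p.2)) := by fun_prop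
    subst hZ
    exact (h.comp (comap_measurable (fun ω => (S ω, C ω)))).stronglyMeasurable
  have key := civ_aux hm W U _ _ hW hWbin hUint (hsm 1) (hsm 0) hgt1 hgt0
  have hYe : Y = ((fun ω => gt (1, Z ω)) - fun ω => gt (0, Z ω)) * W
      + ((fun ω => gt (0, Z ω)) + U) := by
    rw [hY]
    funext ω
    rcases hWbin ω with h | h <;> simp [h] <;> ring
  rw [hYe]
  filter_upwards [key, hexcl, hfactor] with ω h1 h2 h3
  rw [h1, hft₁, hft₀]
  simp only [Pi.add_apply, Pi.mul_apply, Pi.sub_apply]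
  rw [h2, h3]
  ring
end

section
/- Let E be a measurable space and ν a measure on E (the law of the observed confounders C). Let π₀, π₁, h₀, h₁, h₀', h₁' : E → ℝ be measurable functions and suppose that for ν-almost every c: π₀(c) ≠ π₁(c), and for each s ∈ {0,1}, h₁(c)·π_s(c) + h₀(c)·(1 − π_s(c)) = h₁'(c)·π_s(c) + h₀'(c)·(1 − π_s(c)). Then h₁ = h₁' ν-almost everywhere and h₀ = h₀' ν-almost everywhere. -/
open MeasureTheory

/-- Identifiability of the counterfactual prediction functions: if the conditional treatment
probabilities `π₀, π₁` under the two instrument values differ ν-a.e. (instrument relevance),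
then the pair `(h₁, h₀)` solving the inverse problem is unique ν-a.e. -/
theorem counterfactual_functions_identifiable
    {E : Type*} [MeasurableSpace E] (ν : Measure E)
    (π₀ π₁ h₁ h₀ h₁' h₀' : E → ℝ)
    (hπ₀ : Measurable π₀) (hπ₁ : Measurable π₁)
    (hh₁ : Measurable h₁) (hh₀ : Measurable h₀)
    (hh₁' : Measurable h₁') (hh₀' : Measurable h₀')
    (hne : ∀ᵐ c ∂ν, π₀ c ≠ π₁ c)
    (heq0 : ∀ᵐ c ∂ν,
      h₁ c * π₀ c + h₀ c * (1 - π₀ c) = h₁' c * π₀ c + h₀' c * (1 - π₀ c))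
    (heq1 : ∀ᵐ c ∂ν,
      h₁ c * π₁ c + h₀ c * (1 - π₁ c) = h₁' c * π₁ c + h₀' c * (1 - π₁ c)) :
    h₁ =ᵐ[ν] h₁' ∧ h₀ =ᵐ[ν] h₀' := by
  constructor
  · filter_upwards [hne, heq0, heq1] with c hc e0 e1
    apply mul_right_cancel₀ (sub_ne_zero.mpr hc)
    linear_combination (1 - π₁ c) * e0 - (1 - π₀ c) * e1
  · filter_upwards [hne, heq0, heq1] with c hc e0 e1
    apply mul_right_cancel₀ (sub_ne_zero.mpr hc)
    linear_combination π₀ c * e1 - π₁ c * e0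
end
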